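/- Let d ≥ 2, p ≥ 1 and q > p. Let (u_i) be a sequence of Schwarz symmetric functions on ℤ^d with ‖u_i‖_p ≤ 1 for all i. Then there is a subsequence of (u_i) that converges in the ℓ^q(ℤ^d) norm. -/

import Mathlib

open Filter Topology

noncomputable section

abbrev ZLat (d : ℕ) := Fin d → ℤ

def stdVec (d : ℕ) (i : Fin d) : Fin d → ℝ := fun j => if j = i then 1 else 0

/-- The set of directions E⃗ ⊆ ℝ^d. -/
def Evec (d : ℕ) : Set (Fin d → ℝ) :=
  {e | (∃ i, e = stdVec d i) ∨
    (∃ i j : Fin d, i < j ∧ e = fun k => (stdVec d i k + stdVec d j k) / 2) ∨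
    (∃ i j : Fin d, i < j ∧ e = fun k => (stdVec d i k - stdVec d j k) / 2)}

/-- A fixed enumeration of E⃗ (for d = 2 it is e₁, e₂, (e₁+e₂)/2, (e₁-e₂)/2). -/
def EvecList (d : ℕ) : List (Fin d → ℝ) :=
  ((List.finRange d).map (stdVec d)) ++
  ((List.finRange d).flatMap fun i => (List.finRange d).filterMap fun j =>
    if i < j then some (fun k => (stdVec d i k + stdVec d j k) / 2) else none) ++
  ((List.finRange d).flatMap fun i => (List.finRange d).filterMap fun j =>
    if i < j then some (fun k => (stdVec d i k - stdVec d j k) / 2) else none)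

/-- The n-th largest value of `u`, counted with multiplicity (1-indexed). -/
def nthLargest {α : Type*} (u : α → NNReal) (n : ℕ) : NNReal :=
  sSup {t | ∃ Ω : Finset α, Ω.card = n ∧ ∀ x ∈ Ω, t ≤ u x}

/-- The 1-indexed position of the point with doubled coordinate `m` in the
spiral order 0, 1, −1, 2, −2, … (for even m) resp. 1/2, −1/2, 3/2, −3/2, … (for odd m). -/
def posIdx (m : ℤ) : ℕ := (if 0 < m then m else 1 - m).toNat

/-- `x` and `y` lie on a common line with direction `e`. -/
def sameLine {d : ℕ} (e : Fin d → ℝ) (x y : ZLat d) : Prop :=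
  ∃ c : ℝ, (fun i => (x i : ℝ) - (y i : ℝ)) = c • e

/-- Twice the inner product ⟨e, x⟩, as an integer. -/
def pairing {d : ℕ} (e : Fin d → ℝ) (x : ZLat d) : ℤ :=
  ⌊2 * ∑ i, e i * (x i : ℝ)⌋

/-- One-step rearrangement `R_e`. -/
def stepR {d : ℕ} (e : Fin d → ℝ) (u : ZLat d → NNReal) : ZLat d → NNReal :=
  fun x => nthLargest (fun y : {y : ZLat d // sameLine e x y} => u y.1) (posIdx (pairing e x))

/-- `R^k u` : k successive one-step rearrangements cycling through the fixed enumeration. -/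
def iterR (d : ℕ) (u : ZLat d → NNReal) : ℕ → ZLat d → NNReal
  | 0 => u
  | k + 1 => stepR ((EvecList d).getD (k % (EvecList d).length) 0) (iterR d u k)

/-- The Schwarz rearrangement on ℤ^d : pointwise limit of `R^k u`. -/
def RZd (d : ℕ) (u : ZLat d → NNReal) : ZLat d → NNReal :=
  fun x => limUnder atTop fun k => iterR d u k x

def Admissible {α : Type*} (u : α → NNReal) : Prop :=
  ∀ t : NNReal, 0 < t → {x | t < u x}.Finite

def Equimeasurable {α : Type*} (u v : α → NNReal) : Prop :=
  ∀ t : NNReal, 0 < t → Nonempty ({x | t < u x} ≃ {x | t < v x})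

/-- Graph distance (ℓ¹ distance) on the lattice ℤ^d. -/
def latDist {d : ℕ} (x y : ZLat d) : ℕ := ∑ i, (x i - y i).natAbs

/-- The i-th standard basis vector of ℤ^d. -/
def latE {d : ℕ} (i : Fin d) : ZLat d := fun j => if j = i then 1 else 0

/-- ‖∇u‖_p^p : the p-Sobolev energy, summing over each edge {x, x+e_i} once. -/
def gradEnergy (d : ℕ) (p : ℝ) (u : ZLat d → NNReal) : ENNReal :=
  ∑' (x : ZLat d) (i : Fin d), ENNReal.ofReal (|(u (x + latE i) : ℝ) - (u x : ℝ)| ^ p)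

/-- ‖∇u‖_p. -/
def gradNorm (d : ℕ) (p : ℝ) (u : ZLat d → NNReal) : ENNReal :=
  gradEnergy d p u ^ (1 / p)

/-- Graph automorphism of the lattice graph ℤ^d. -/
def IsLatAuto {d : ℕ} (σ : ZLat d ≃ ZLat d) : Prop :=
  ∀ x y : ZLat d, latDist (σ x) (σ y) = 1 ↔ latDist x y = 1

def Supermodular (G : NNReal → NNReal → NNReal) : Prop :=
  ∀ s t s₀ t₀ : NNReal, G (s + s₀) t + G s (t + t₀) ≤ G (s + s₀) (t + t₀) + G s t

def StrictlySupermodular (G : NNReal → NNReal → NNReal) : Prop :=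
  ∀ s t s₀ t₀ : NNReal, 0 < s₀ → 0 < t₀ →
    G (s + s₀) t + G s (t + t₀) < G (s + s₀) (t + t₀) + G s t

/-- The values of `u` are strictly decreasing: a₁ > a₂ > a₃ > ⋯ . -/
def StrictRan {α : Type*} (u : α → NNReal) : Prop :=
  ∀ n : ℕ, 0 < n → nthLargest u (n + 1) < nthLargest u n

/-!
Fix a generic point `z` close to the origin with small, strictly decreasing, positive coordinates.
On every line in a direction of `E⃗` the spiral order is the order by distance to `z`. Hence each
one-step rearrangement increases the sum of `u` over every finite set that is a down-set for this
distance, which makes these sums, and with them `R^k u`, converge pointwise. A Schwarz symmetric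
function is therefore nonincreasing along each line in the distance to `z`; along the coordinate
lines this gives `|x i| * u x ^ p ≤ ‖u‖_p ^ p`, a decay at infinity that is uniform over the
`ℓ^p` ball. Compactness of the ball for pointwise convergence and the interpolation
`|a - b| ^ q ≤ ε ^ (q - p) * (a ^ p + b ^ p)` for `a, b ≤ ε` then yield convergence in `ℓ^q`.
-/

section NthLargest

variable {α : Type*} {u : α → NNReal} {M : NNReal}

theorem mem_upperBounds_nthLargest (hM : ∀ x, u x ≤ M) (n : ℕ) :
    M ∈ upperBounds {t | ∃ Ω : Finset α, Ω.card = n + 1 ∧ ∀ x ∈ Ω, t ≤ u x} := by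
  rintro t ⟨Ω, hcard, ht⟩
  obtain ⟨x, hx⟩ := Finset.card_pos.mp (by omega : 0 < Ω.card)
  exact (ht x hx).trans (hM x)

theorem nthLargest_succ_le (hM : ∀ x, u x ≤ M) (n : ℕ) : nthLargest u (n + 1) ≤ M :=
  csSup_le' (mem_upperBounds_nthLargest hM n)

theorem le_nthLargest_succ (hM : ∀ x, u x ≤ M) {n : ℕ} {t : NNReal} {Ω : Finset α}
    (hcard : Ω.card = n + 1) (ht : ∀ x ∈ Ω, t ≤ u x) : t ≤ nthLargest u (n + 1) :=
  le_csSup ⟨M, mem_upperBounds_nthLargest hM n⟩ ⟨Ω, hcard, ht⟩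

theorem antitone_nthLargest_succ (hM : ∀ x, u x ≤ M) :
    Antitone fun n => nthLargest u (n + 1) := by
  intro m n hmn
  refine csSup_le' ?_
  rintro t ⟨Ω, hcard, ht⟩
  obtain ⟨Ω', hsub, hcard'⟩ := Finset.exists_subset_card_eq (by omega : m + 1 ≤ Ω.card)
  exact le_nthLargest_succ hM hcard' fun x hx => ht x (hsub hx)

theorem sum_le_sum_nthLargest (hM : ∀ x, u x ≤ M) (T : Finset α) :
    ∑ x ∈ T, u x ≤ ∑ j ∈ Finset.range T.card, nthLargest u (j + 1) := by
  classical
  induction T using Finset.induction_on_max_value (OrderDual.toDual ∘ u) with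
  | empty => simp
  | insert a s has hmin ih =>
    have hcard := Finset.card_insert_of_notMem has
    rw [Finset.sum_insert has, hcard, Finset.sum_range_succ, add_comm]
    refine add_le_add ih (le_nthLargest_succ hM hcard fun x hx => ?_)
    rcases Finset.mem_insert.mp hx with rfl | hx
    · exact le_rfl
    · exact hmin x hx

end NthLargest

theorem sum_range_card_le_sum_card_filter_lt {α β N : Type*} [LinearOrder β] [AddCommMonoid N]
    [PartialOrder N] [IsOrderedAddMonoid N] (f : α → β) {a : ℕ → N} (ha : Antitone a)
    (T : Finset α) :
    ∑ j ∈ Finset.range T.card, a j ≤ ∑ x ∈ T, a (T.filter fun y => f y < f x).card := by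
  classical
  induction T using Finset.induction_on_max_value f with
  | empty => simp
  | insert b s hbs hmax ih =>
    have hfilter : ∀ x ∈ insert b s,
        (insert b s).filter (fun y => f y < f x) = s.filter fun y => f y < f x := by
      intro x hx
      rw [Finset.filter_insert, if_neg (not_lt.mpr ?_)]
      rcases Finset.mem_insert.mp hx with rfl | hx
      · exact le_rfl
      · exact hmax x hx
    calc ∑ j ∈ Finset.range (insert b s).card, a j
        = a s.card + ∑ j ∈ Finset.range s.card, a j := by
          rw [Finset.card_insert_of_notMem hbs, Finset.sum_range_succ, add_comm]
      _ ≤ a (s.filter fun y => f y < f b).card + ∑ x ∈ s, a (s.filter fun y => f y < f x).card :=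
          add_le_add (ha (Finset.card_filter_le _ _)) ih
      _ = ∑ x ∈ insert b s, a (s.filter fun y => f y < f x).card := by
          rw [Finset.sum_insert hbs]
      _ = ∑ x ∈ insert b s, a ((insert b s).filter fun y => f y < f x).card :=
          Finset.sum_congr rfl fun x hx => by rw [hfilter x hx]

section SpiralPotential

open scoped Matrix

variable {d : ℕ}

/-- The multiple `2 * (d + 1)` of the generic point `z` near the origin whose distance realises
the spiral order; the factor makes it a lattice vector. -/
def tilt (d : ℕ) : ZLat d := fun i => d - (i : ℕ)

/-- The squared distance to `tilt d / (2 * (d + 1))`, multiplied by `d + 1` and normalised to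
vanish at the origin, so that it takes integer values. -/
def spiralPotential (x : ZLat d) : ℤ := (d + 1) * (x ⬝ᵥ x) - tilt d ⬝ᵥ x

theorem spiralPotential_add_zsmul (x v : ZLat d) (k : ℤ) :
    spiralPotential (x + k • v) =
      spiralPotential x + k * ((d + 1) * (2 * (v ⬝ᵥ x) + k * (v ⬝ᵥ v)) - tilt d ⬝ᵥ v) := by
  simp only [spiralPotential, dotProduct_add, add_dotProduct, dotProduct_smul, smul_dotProduct,
    smul_eq_mul, dotProduct_comm x v]
  ring

theorem sq_le_spiralPotential (x : ZLat d) (i : Fin d) : x i ^ 2 ≤ spiralPotential x := by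
  have hterm (j : Fin d) : x j ^ 2 ≤ (d + 1) * (x j * x j) - tilt d j * x j := by
    have hself : x j ≤ x j ^ 2 := Int.le_self_sq _
    have htilt : 0 ≤ tilt d j := by unfold tilt; omega
    have htilt' : tilt d j ≤ d := by unfold tilt; omega
    nlinarith [mul_le_mul_of_nonneg_left hself htilt,
      mul_le_mul_of_nonneg_right htilt' (sq_nonneg (x j))]
  calc x i ^ 2 ≤ ∑ j, x j ^ 2 :=
        Finset.single_le_sum (fun j _ => sq_nonneg (x j)) (Finset.mem_univ i)
    _ ≤ ∑ j, ((d + 1) * (x j * x j) - tilt d j * x j) := Finset.sum_le_sum fun j _ => hterm j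
    _ = spiralPotential x := by
        simp only [spiralPotential, dotProduct, Finset.mul_sum, Finset.sum_sub_distrib]

theorem finite_setOf_spiralPotential_lt (r : ℤ) : {x : ZLat d | spiralPotential x < r}.Finite := by
  refine (Set.Finite.pi' fun _ : Fin d => Set.finite_Icc (-r) r).subset fun x hx i => ?_
  have hsq : x i ^ 2 < r := (sq_le_spiralPotential x i).trans_lt hx
  exact ⟨by nlinarith [Int.le_self_sq (-x i)], by nlinarith [Int.le_self_sq (x i)]⟩

end SpiralPotential

section Directions

open scoped Matrix

variable {d : ℕ} {e : Fin d → ℝ} {v : ZLat d} {m : ℤ}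

theorem sameLine_equivalence (e : Fin d → ℝ) : Equivalence (sameLine e) where
  refl x := ⟨0, by ext; simp⟩
  symm := by
    rintro x y ⟨c, hc⟩
    exact ⟨-c, by rw [neg_smul, ← hc]; ext; simp⟩
  trans := by
    rintro x y z ⟨c, hc⟩ ⟨c', hc'⟩
    exact ⟨c + c', by rw [add_smul, ← hc, ← hc']; ext; simp⟩

/-- The partition of `ℤ^d` into its intersections with the lines of direction `e`. -/
def lineSetoid (e : Fin d → ℝ) : Setoid (ZLat d) := ⟨sameLine e, sameLine_equivalence e⟩

/-- The points of the line through `x` in direction `e` that are strictly closer than `x` to the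
centre of `spiralPotential`. -/
def linePredecessors (e : Fin d → ℝ) (x : ZLat d) : Set (ZLat d) :=
  {y | sameLine e x y ∧ spiralPotential y < spiralPotential x}

theorem finite_linePredecessors (e : Fin d → ℝ) (x : ZLat d) : (linePredecessors e x).Finite :=
  (finite_setOf_spiralPotential_lt (spiralPotential x)).subset fun _ hy => hy.2

/-- `v` is the primitive lattice vector in the direction `e ∈ E⃗`, and `m = 2 * |e| ^ 2`. The last
two fields say that the centre of `spiralPotential` projects onto `ℝ v` strictly between `0` and
`v / 2`. -/
structure IsPrimitiveVector (e : Fin d → ℝ) (m : ℤ) (v : ZLat d) : Prop where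
  eq_smul : e = fun i => (m : ℝ) / 2 * v i
  mul_dotProduct_self : m * (v ⬝ᵥ v) = 2
  exists_eq_one : ∃ i, v i = 1
  tilt_pos : 0 < tilt d ⬝ᵥ v
  tilt_lt : tilt d ⬝ᵥ v < (d + 1) * (v ⬝ᵥ v)

theorem isPrimitiveVector_stdVec (i : Fin d) :
    IsPrimitiveVector (stdVec d i) 2 (Pi.single i 1) where
  eq_smul := by ext k; simp [stdVec, Pi.single_apply]
  mul_dotProduct_self := by simp
  exists_eq_one := ⟨i, by simp⟩
  tilt_pos := by simp [tilt]
  tilt_lt := by simp [tilt]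

theorem isPrimitiveVector_add {i j : Fin d} (hij : i < j) :
    IsPrimitiveVector (fun k => (stdVec d i k + stdVec d j k) / 2) 1
      (Pi.single i 1 + Pi.single j 1) where
  eq_smul := by
    ext k
    simp only [stdVec, Pi.add_apply, Pi.single_apply, Int.cast_add, Int.cast_ite, Int.cast_one,
      Int.cast_zero]
    ring
  mul_dotProduct_self := by simp [hij.ne, hij.ne']
  exists_eq_one := ⟨i, by simp [hij.ne]⟩
  tilt_pos := by simp only [tilt, dotProduct_add, dotProduct_single, mul_one]; omega
  tilt_lt := by
    simp only [tilt, dotProduct_add, dotProduct_single, Pi.add_apply, Pi.single_eq_same,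
      Pi.single_eq_of_ne hij.ne, Pi.single_eq_of_ne hij.ne', add_zero, zero_add, mul_one]
    omega

theorem isPrimitiveVector_sub {i j : Fin d} (hij : i < j) :
    IsPrimitiveVector (fun k => (stdVec d i k - stdVec d j k) / 2) 1
      (Pi.single i 1 - Pi.single j 1) where
  eq_smul := by
    ext k
    simp only [stdVec, Pi.sub_apply, Pi.single_apply, Int.cast_sub, Int.cast_ite, Int.cast_one,
      Int.cast_zero]
    ring
  mul_dotProduct_self := by simp [hij.ne, hij.ne']
  exists_eq_one := ⟨i, by simp [hij.ne]⟩
  tilt_pos := by simp only [tilt, dotProduct_sub, dotProduct_single, mul_one]; omega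
  tilt_lt := by
    simp only [tilt, dotProduct_sub, dotProduct_single, Pi.sub_apply, Pi.single_eq_same,
      Pi.single_eq_of_ne hij.ne, Pi.single_eq_of_ne hij.ne', sub_zero, zero_sub, mul_one]
    omega

theorem exists_isPrimitiveVector (he : e ∈ Evec d) : ∃ m v, IsPrimitiveVector e m v := by
  rcases he with ⟨i, rfl⟩ | ⟨i, j, hij, rfl⟩ | ⟨i, j, hij, rfl⟩
  · exact ⟨_, _, isPrimitiveVector_stdVec i⟩
  · exact ⟨_, _, isPrimitiveVector_add hij⟩
  · exact ⟨_, _, isPrimitiveVector_sub hij⟩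

namespace IsPrimitiveVector

theorem pairing_eq (h : IsPrimitiveVector e m v) (x : ZLat d) : pairing e x = m * (v ⬝ᵥ x) := by
  have hcast : 2 * ∑ i, e i * (x i : ℝ) = ((m * (v ⬝ᵥ x) : ℤ) : ℝ) := by
    simp only [h.eq_smul, dotProduct, Int.cast_mul, Int.cast_sum, Finset.mul_sum]
    exact Finset.sum_congr rfl fun i _ => by ring
  rw [pairing, hcast, Int.floor_intCast]

theorem sameLine_iff (h : IsPrimitiveVector e m v) {x y : ZLat d} :
    sameLine e x y ↔ ∃ k : ℤ, y = x + k • v := by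
  have hm : (m : ℝ) ≠ 0 := by
    rintro hm
    simpa [Int.cast_eq_zero.mp hm] using h.mul_dotProduct_self
  constructor
  · rintro ⟨c, hc⟩
    obtain ⟨i, hi⟩ := h.exists_eq_one
    have hcoord (j : Fin d) : (x j : ℝ) - y j = c * (m / 2 * v j) := by
      simpa [h.eq_smul] using congrFun hc j
    have hstep : c * (m / 2) = x i - y i := by rw [hcoord i, hi]; simp
    refine ⟨y i - x i, funext fun j => ?_⟩
    have hj := hcoord j
    rw [← mul_assoc, hstep] at hj
    rify
    simp only [Pi.add_apply, Pi.smul_apply, smul_eq_mul]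
    push_cast
    linarith
  · rintro ⟨k, rfl⟩
    refine ⟨-(k * (2 / m)), funext fun j => ?_⟩
    simp only [h.eq_smul, Pi.add_apply, Pi.smul_apply, smul_eq_mul]
    push_cast
    field_simp
    ring

theorem spiralPotential_add_zsmul_lt_iff (h : IsPrimitiveVector e m v) (x : ZLat d) (k : ℤ) :
    spiralPotential (x + k • v) < spiralPotential x ↔
      k ∈ Finset.Ioo (-pairing e x) 0 ∪ Finset.Ioc 0 (-pairing e x) := by
  set B : ℤ := (d + 1) * (v ⬝ᵥ v)
  set W : ℤ := tilt d ⬝ᵥ v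
  set P : ℤ := pairing e x
  have hdot : 2 * (v ⬝ᵥ x) = (v ⬝ᵥ v) * P := by
    rw [show P = _ from h.pairing_eq x, ← h.mul_dotProduct_self]; ring
  have hW : 0 < W := h.tilt_pos
  have hWB : W < B := h.tilt_lt
  have hpos : 0 < B * (P + k) - W ↔ 0 < P + k :=
    ⟨fun _ => by by_contra! hk; nlinarith, fun hk => by nlinarith⟩
  have hneg : B * (P + k) - W < 0 ↔ P + k ≤ 0 :=
    ⟨fun _ => by by_contra! hk; nlinarith, fun hk => by nlinarith⟩
  have hstep : spiralPotential (x + k • v) = spiralPotential x + k * (B * (P + k) - W) := by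
    rw [spiralPotential_add_zsmul, hdot]; ring
  rw [hstep, add_lt_iff_neg_left, mul_neg_iff, hpos, hneg, Finset.mem_union, Finset.mem_Ioo,
    Finset.mem_Ioc]
  omega

end IsPrimitiveVector

theorem posIdx_pairing (he : e ∈ Evec d) (x : ZLat d) :
    posIdx (pairing e x) = (linePredecessors e x).ncard + 1 := by
  obtain ⟨m, v, h⟩ := exists_isPrimitiveVector he
  have hv : v ≠ 0 := by rintro rfl; simpa using h.tilt_pos
  have himage : linePredecessors e x = (fun k : ℤ => x + k • v) ''
      ↑(Finset.Ioo (-pairing e x) 0 ∪ Finset.Ioc 0 (-pairing e x)) := by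
    ext y
    simp only [linePredecessors, Set.mem_ofPred_eq, h.sameLine_iff, Set.mem_image, Finset.mem_coe,
      ← h.spiralPotential_add_zsmul_lt_iff x]
    constructor
    · rintro ⟨⟨k, rfl⟩, hk⟩
      exact ⟨k, hk, rfl⟩
    · rintro ⟨k, hk, rfl⟩
      exact ⟨⟨k, rfl⟩, hk⟩
  have hinj : Function.Injective fun k : ℤ => x + k • v :=
    (add_right_injective x).comp (smul_left_injective ℤ hv)
  have hdisj : Disjoint (Finset.Ioo (-pairing e x) 0) (Finset.Ioc 0 (-pairing e x)) :=
    Finset.disjoint_left.mpr fun k hk hk' => by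
      rw [Finset.mem_Ioo] at hk
      rw [Finset.mem_Ioc] at hk'
      omega
  rw [himage, Set.ncard_image_of_injective _ hinj, Set.ncard_coe_finset,
    Finset.card_union_of_disjoint hdisj, Int.card_Ioo, Int.card_Ioc, posIdx]
  split_ifs <;> omega

theorem ncard_linePredecessors_mono {x y : ZLat d} (hxy : sameLine e x y)
    (hle : spiralPotential y ≤ spiralPotential x) :
    (linePredecessors e y).ncard ≤ (linePredecessors e x).ncard :=
  Set.ncard_le_ncard
    (fun _ hz => ⟨(sameLine_equivalence e).trans hxy hz.1, hz.2.trans_le hle⟩)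
    (finite_linePredecessors e x)

theorem natAbs_le_ncard_linePredecessors (x : ZLat d) (i : Fin d) :
    (x i).natAbs ≤ (linePredecessors (stdVec d i) x).ncard := by
  have hrank := posIdx_pairing (Or.inl ⟨i, rfl⟩ : stdVec d i ∈ Evec d) x
  rw [(isPrimitiveVector_stdVec i).pairing_eq, single_one_dotProduct, posIdx] at hrank
  split_ifs at hrank <;> omega

theorem mem_EvecList : e ∈ EvecList d ↔ e ∈ Evec d := by
  simp [EvecList, Evec, eq_comm]

end Directions

section Rearrangement

variable {d : ℕ} {e : Fin d → ℝ} {u : ZLat d → NNReal} {M : NNReal}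

theorem stepR_eq_nthLargest (he : e ∈ Evec d) {x y : ZLat d} (hxy : sameLine e x y) :
    stepR e u y =
      nthLargest (fun z : {z // sameLine e x z} => u z) ((linePredecessors e y).ncard + 1) := by
  have hline : sameLine e y = sameLine e x := by
    ext z
    exact ⟨(sameLine_equivalence e).trans hxy,
      (sameLine_equivalence e).trans ((sameLine_equivalence e).symm hxy)⟩
  rw [stepR, posIdx_pairing he, hline]

theorem stepR_le (he : e ∈ Evec d) (hM : ∀ x, u x ≤ M) (x : ZLat d) : stepR e u x ≤ M := by
  rw [stepR_eq_nthLargest he ((sameLine_equivalence e).refl x)]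
  exact nthLargest_succ_le (fun _ => hM _) _

theorem stepR_le_stepR (he : e ∈ Evec d) (hM : ∀ x, u x ≤ M) {x y : ZLat d}
    (hxy : sameLine e x y) (hle : spiralPotential y ≤ spiralPotential x) :
    stepR e u x ≤ stepR e u y := by
  rw [stepR_eq_nthLargest he ((sameLine_equivalence e).refl x), stepR_eq_nthLargest he hxy]
  exact antitone_nthLargest_succ (fun _ => hM _)
    (ncard_linePredecessors_mono hxy hle)

theorem sum_le_sum_stepR_of_sameLine (he : e ∈ Evec d) (hM : ∀ x, u x ≤ M) {x₀ : ZLat d}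
    {T : Finset (ZLat d)} (hline : ∀ x ∈ T, sameLine e x₀ x)
    (hT : ∀ x ∈ T, linePredecessors e x ⊆ T) : ∑ x ∈ T, u x ≤ ∑ x ∈ T, stepR e u x := by
  classical
  set a : ℕ → NNReal := fun n => nthLargest (fun z : {z // sameLine e x₀ z} => u z) (n + 1)
  have ha : Antitone a := antitone_nthLargest_succ fun _ => hM _
  have hrank : ∀ x ∈ T, (linePredecessors e x).ncard =
      (T.filter fun y => spiralPotential y < spiralPotential x).card := by
    intro x hx
    rw [← Set.ncard_coe_finset, Finset.coe_filter]
    congr 1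
    ext y
    refine ⟨fun hy => ⟨hT x hx hy, hy.2⟩, fun hy => ⟨?_, hy.2⟩⟩
    exact (sameLine_equivalence e).trans ((sameLine_equivalence e).symm (hline x hx))
      (hline y hy.1)
  calc ∑ x ∈ T, u x
      = ∑ z ∈ T.subtype (sameLine e x₀), u z := (Finset.sum_subtype_of_mem u hline).symm
    _ ≤ ∑ j ∈ Finset.range (T.subtype (sameLine e x₀)).card, a j :=
        sum_le_sum_nthLargest (fun _ => hM _) _
    _ = ∑ j ∈ Finset.range T.card, a j := by
        rw [Finset.card_subtype, Finset.filter_true_of_mem hline]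
    _ ≤ ∑ x ∈ T, a (T.filter fun y => spiralPotential y < spiralPotential x).card :=
        sum_range_card_le_sum_card_filter_lt spiralPotential ha T
    _ = ∑ x ∈ T, stepR e u x := Finset.sum_congr rfl fun x hx => by
        rw [← hrank x hx, stepR_eq_nthLargest he (hline x hx)]

theorem sum_le_sum_stepR (he : e ∈ Evec d) (hM : ∀ x, u x ≤ M) {S : Finset (ZLat d)}
    (hS : ∀ x ∈ S, ∀ y, spiralPotential y < spiralPotential x → y ∈ S) :
    ∑ x ∈ S, u x ≤ ∑ x ∈ S, stepR e u x := by
  classical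
  rw [Finset.sum_partition (lineSetoid e), Finset.sum_partition (lineSetoid e) (f := stepR e u)]
  refine Finset.sum_le_sum fun c _ => ?_
  induction c using Quotient.inductionOn with
  | h x₀ =>
    have hmem (x : ZLat d) : x ∈ S.filter (fun y => (⟦y⟧ : Quotient (lineSetoid e)) = ⟦x₀⟧) ↔
        x ∈ S ∧ sameLine e x₀ x := by
      rw [Finset.mem_filter, eq_comm, Quotient.eq]
      rfl
    refine sum_le_sum_stepR_of_sameLine he hM (fun x hx => ((hmem x).mp hx).2) fun x hx y hy => ?_
    obtain ⟨hxS, hx⟩ := (hmem x).mp hx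
    exact (hmem y).mpr ⟨hS x hxS y hy.2, (sameLine_equivalence e).trans hx hy.1⟩

theorem getD_EvecList_mem_Evec [NeZero d] (k : ℕ) :
    (EvecList d).getD (k % (EvecList d).length) 0 ∈ Evec d := by
  have hmem : stdVec d 0 ∈ EvecList d := mem_EvecList.mpr (Or.inl ⟨0, rfl⟩)
  rw [List.getD_eq_getElem _ _ (Nat.mod_lt k (List.length_pos_of_mem hmem)), ← mem_EvecList]
  exact List.getElem_mem _

theorem frequently_iterR_succ_eq (he : e ∈ Evec d) (u : ZLat d → NNReal) :
    ∃ᶠ k in atTop, iterR d u (k + 1) = stepR e (iterR d u k) := by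
  obtain ⟨n, hn, rfl⟩ := List.mem_iff_getElem.mp (mem_EvecList.mpr he)
  refine (Nat.frequently_mod_eq hn).mono fun k hk => ?_
  rw [iterR, hk, List.getD_eq_getElem _ _ hn]

theorem iterR_le [NeZero d] (hM : ∀ x, u x ≤ M) (k : ℕ) (x : ZLat d) : iterR d u k x ≤ M := by
  induction k generalizing x with
  | zero => exact hM x
  | succ k ih => exact stepR_le (getD_EvecList_mem_Evec k) ih x

theorem exists_tendsto_sum_iterR [NeZero d] (hM : ∀ x, u x ≤ M) {S : Finset (ZLat d)}
    (hS : ∀ x ∈ S, ∀ y, spiralPotential y < spiralPotential x → y ∈ S) :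
    ∃ l, Tendsto (fun k => ∑ x ∈ S, iterR d u k x) atTop (𝓝 l) := by
  refine ⟨_, tendsto_atTop_ciSup (monotone_nat_of_le_succ fun k => ?_) ⟨∑ _ ∈ S, M, ?_⟩⟩
  · exact sum_le_sum_stepR (getD_EvecList_mem_Evec k) (iterR_le hM k) hS
  · rintro _ ⟨k, rfl⟩
    exact Finset.sum_le_sum fun x _ => iterR_le hM k x

theorem tendsto_iterR [NeZero d] (hM : ∀ x, u x ≤ M) (x : ZLat d) :
    Tendsto (fun k => iterR d u k x) atTop (𝓝 (RZd d u x)) := by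
  classical
  refine tendsto_nhds_limUnder ?_
  set F := (finite_setOf_spiralPotential_lt (spiralPotential x)).toFinset
  have hF (y : ZLat d) : y ∈ F ↔ spiralPotential y < spiralPotential x := by
    rw [Set.Finite.mem_toFinset, Set.mem_ofPred_eq]
  obtain ⟨l, hl⟩ := exists_tendsto_sum_iterR hM (S := F) fun y hy z hz =>
    (hF z).mpr (hz.trans ((hF y).mp hy))
  obtain ⟨l', hl'⟩ := exists_tendsto_sum_iterR hM (S := insert x F) fun y hy z hz => by
    refine Finset.mem_insert_of_mem ((hF z).mpr ?_)
    rcases Finset.mem_insert.mp hy with rfl | hy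
    · exact hz
    · exact hz.trans ((hF y).mp hy)
  refine ⟨l' - l, (hl'.sub hl).congr fun k => ?_⟩
  rw [Finset.sum_insert (fun hx => lt_irrefl _ ((hF x).mp hx)), add_tsub_cancel_right]

theorem RZd_le_RZd (he : e ∈ Evec d) (hM : ∀ x, u x ≤ M) {x y : ZLat d} (hxy : sameLine e x y)
    (hle : spiralPotential y ≤ spiralPotential x) : RZd d u x ≤ RZd d u y := by
  rcases Nat.eq_zero_or_pos d with rfl | hd
  · rw [Subsingleton.elim x y]
  have : NeZero d := ⟨hd.ne'⟩
  refine le_of_tendsto_of_tendsto_of_frequently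
    ((tendsto_iterR hM x).comp (tendsto_add_atTop_nat 1))
    ((tendsto_iterR hM y).comp (tendsto_add_atTop_nat 1))
    ((frequently_iterR_succ_eq he u).mono fun k hk => ?_)
  simp only [Function.comp_apply, hk]
  exact stepR_le_stepR he (iterR_le hM k) hxy hle

end Rearrangement

section Decay

open scoped ENNReal

variable {d : ℕ} {p : ℝ}

theorem natAbs_mul_rpow_RZd_le_tsum {u : ZLat d → NNReal} {M : NNReal} (hM : ∀ x, u x ≤ M)
    (hp : 0 ≤ p) (x : ZLat d) (i : Fin d) :
    (x i).natAbs * (RZd d u x : ℝ≥0∞) ^ p ≤ ∑' y, (RZd d u y : ℝ≥0∞) ^ p := by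
  set F := (finite_linePredecessors (stdVec d i) x).toFinset
  have hcard : (x i).natAbs ≤ F.card := by
    rw [← Set.ncard_eq_toFinset_card _ (finite_linePredecessors _ _)]
    exact natAbs_le_ncard_linePredecessors x i
  have hmono : ∀ y ∈ F, RZd d u x ≤ RZd d u y := by
    intro y hy
    obtain ⟨hline, hlt⟩ := (Set.Finite.mem_toFinset _).mp hy
    exact RZd_le_RZd (Or.inl ⟨i, rfl⟩) hM hline hlt.le
  calc (x i).natAbs * (RZd d u x : ℝ≥0∞) ^ p
      ≤ F.card * (RZd d u x : ℝ≥0∞) ^ p := by gcongr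
    _ = F.card • (RZd d u x : ℝ≥0∞) ^ p := (nsmul_eq_mul _ _).symm
    _ ≤ ∑ y ∈ F, (RZd d u y : ℝ≥0∞) ^ p :=
        Finset.card_nsmul_le_sum _ _ _ fun y hy =>
          ENNReal.rpow_le_rpow (ENNReal.coe_le_coe.mpr (hmono y hy)) hp
    _ ≤ ∑' y, (RZd d u y : ℝ≥0∞) ^ p := ENNReal.sum_le_tsum F

theorem le_toNNReal_of_tsum_rpow_le {X : Type*} {w : X → NNReal} {C : ℝ≥0∞} (hp : 0 < p)
    (hC : C ≠ ∞) (hw : ∑' x, (w x : ℝ≥0∞) ^ p ≤ C) (x : X) : w x ≤ (C ^ p⁻¹).toNNReal := by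
  rw [← ENNReal.coe_le_coe, ENNReal.coe_toNNReal (ENNReal.rpow_ne_top_of_nonneg (by positivity) hC),
    ENNReal.le_rpow_inv_iff hp]
  exact (ENNReal.le_tsum x).trans hw

theorem exists_finset_forall_notMem_le_of_RZd_eq (d : ℕ) {C : ℝ≥0∞} {ε : NNReal} (hp : 0 < p)
    (hC : C ≠ ∞) (hε : 0 < ε) :
    ∃ K : Finset (ZLat d), ∀ u : ZLat d → NNReal, RZd d u = u →
      ∑' x, (u x : ℝ≥0∞) ^ p ≤ C → ∀ x ∉ K, u x ≤ ε := by
  have hεp : (ε : ℝ≥0∞) ^ p ≠ 0 := by simp [hε.ne', hp]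
  obtain ⟨N, hN⟩ := ENNReal.exists_nat_gt (ENNReal.div_ne_top hC hεp)
  refine ⟨Fintype.piFinset fun _ => Finset.Icc (-N : ℤ) N, fun u hsym hu x hx => ?_⟩
  obtain ⟨i, hi⟩ : ∃ i, x i ∉ Finset.Icc (-N : ℤ) N := by
    simpa only [Fintype.mem_piFinset, not_forall] using hx
  have hNx : N ≤ (x i).natAbs := by rw [Finset.mem_Icc] at hi; omega
  have hdecay := natAbs_mul_rpow_RZd_le_tsum (le_toNNReal_of_tsum_rpow_le hp hC hu) hp.le x i
  rw [hsym] at hdecay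
  by_contra! hlt
  refine (lt_irrefl C) ?_
  calc C < N * (ε : ℝ≥0∞) ^ p := ?_
    _ ≤ (x i).natAbs * (u x : ℝ≥0∞) ^ p := by gcongr
    _ ≤ C := hdecay.trans hu
  exact (ENNReal.div_lt_iff (Or.inl hεp) (Or.inr hC)).mp hN

end Decay

section Interpolation

open scoped ENNReal

variable {X ι : Type*} {p q : ℝ}

theorem edist_rpow_le {a b ε : NNReal} (hp : 0 ≤ p) (hq : p ≤ q) (ha : a ≤ ε) (hb : b ≤ ε) :
    edist a b ^ q ≤ (ε : ℝ≥0∞) ^ (q - p) * ((a : ℝ≥0∞) ^ p + (b : ℝ≥0∞) ^ p) := by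
  have hdist : edist a b ≤ max (a : ℝ≥0∞) b := by
    rw [edist_nndist, ← ENNReal.coe_max, ENNReal.coe_le_coe, NNReal.nndist_eq]
    exact max_le_max tsub_le_self tsub_le_self
  have hmax : max (a : ℝ≥0∞) b ^ p ≤ (a : ℝ≥0∞) ^ p + (b : ℝ≥0∞) ^ p := by
    rw [(ENNReal.monotone_rpow_of_nonneg hp).map_max]
    exact max_le le_self_add le_add_self
  calc edist a b ^ q
      ≤ max (a : ℝ≥0∞) b ^ q := ENNReal.rpow_le_rpow hdist (hp.trans hq)
    _ = max (a : ℝ≥0∞) b ^ (q - p) * max (a : ℝ≥0∞) b ^ p := by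
        rw [← ENNReal.rpow_add_of_nonneg _ _ (sub_nonneg.mpr hq) hp, sub_add_cancel]
    _ ≤ (ε : ℝ≥0∞) ^ (q - p) * ((a : ℝ≥0∞) ^ p + (b : ℝ≥0∞) ^ p) :=
        mul_le_mul' (ENNReal.rpow_le_rpow
          (max_le (ENNReal.coe_le_coe.mpr ha) (ENNReal.coe_le_coe.mpr hb)) (sub_nonneg.mpr hq)) hmax

theorem tsum_edist_rpow_le {f g : X → NNReal} {ε : NNReal} (hp : 0 ≤ p) (hq : p ≤ q)
    {K : Finset X} (hf : ∀ x ∉ K, f x ≤ ε) (hg : ∀ x ∉ K, g x ≤ ε) :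
    ∑' x, edist (f x) (g x) ^ q ≤ ∑ x ∈ K, edist (f x) (g x) ^ q +
      (ε : ℝ≥0∞) ^ (q - p) * (∑' x, (f x : ℝ≥0∞) ^ p + ∑' x, (g x : ℝ≥0∞) ^ p) := by
  rw [← ENNReal.sum_add_tsum_compl K, ← ENNReal.tsum_add, ← ENNReal.tsum_mul_left]
  refine add_le_add le_rfl ?_
  calc ∑' x : ↥(K : Set X)ᶜ, edist (f x) (g x) ^ q
      ≤ ∑' x : ↥(K : Set X)ᶜ,
          (ε : ℝ≥0∞) ^ (q - p) * ((f x : ℝ≥0∞) ^ p + (g x : ℝ≥0∞) ^ p) :=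
        ENNReal.tsum_le_tsum fun x => edist_rpow_le hp hq (hf x x.2) (hg x x.2)
    _ ≤ ∑' x, (ε : ℝ≥0∞) ^ (q - p) * ((f x : ℝ≥0∞) ^ p + (g x : ℝ≥0∞) ^ p) :=
        ENNReal.tsum_comp_le_tsum_of_injective Subtype.val_injective _

theorem exists_pos_coe_rpow_mul_le {r : ℝ} {C δ : ℝ≥0∞} (hr : 0 < r) (hC : C ≠ ∞) (hδ : 0 < δ) :
    ∃ ε : NNReal, 0 < ε ∧ (ε : ℝ≥0∞) ^ r * C ≤ δ := by
  have hlim : Tendsto (fun ε : NNReal => (ε : ℝ≥0∞) ^ r * C) (𝓝[>] 0) (𝓝 0) := by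
    have hcont : Continuous fun ε : NNReal => (ε : ℝ≥0∞) ^ r :=
      ENNReal.continuous_rpow_const.comp ENNReal.continuous_coe
    have hmul := ENNReal.Tendsto.mul_const (hcont.tendsto 0) (Or.inr hC)
    rw [ENNReal.coe_zero, ENNReal.zero_rpow_of_pos hr, zero_mul] at hmul
    exact hmul.mono_left nhdsWithin_le_nhds
  obtain ⟨ε, hle, hpos⟩ := ((hlim.eventually_le_const hδ).and self_mem_nhdsWithin).exists
  exact ⟨ε, hpos, hle⟩

theorem tendsto_tsum_edist_rpow {l : Filter ι} [l.NeBot] {u : ι → X → NNReal} {v : X → NNReal}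
    {C : ℝ≥0∞} (hp : 0 ≤ p) (hq : p < q) (hC : C ≠ ∞)
    (hu : ∀ i, ∑' x, (u i x : ℝ≥0∞) ^ p ≤ C) (hv : ∑' x, (v x : ℝ≥0∞) ^ p ≤ C)
    (hvanish : ∀ ε : NNReal, 0 < ε → ∃ K : Finset X, ∀ i, ∀ x ∉ K, u i x ≤ ε)
    (hlim : Tendsto u l (𝓝 v)) :
    Tendsto (fun i => ∑' x, edist (u i x) (v x) ^ q) l (𝓝 0) := by
  have hq0 : 0 < q := hp.trans_lt hq
  have hpointwise := tendsto_pi_nhds.mp hlim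
  rw [ENNReal.tendsto_nhds_zero]
  intro δ hδ
  have hδ2 : 0 < δ / 2 := ENNReal.half_pos hδ.ne'
  obtain ⟨ε, hε, hεδ⟩ := exists_pos_coe_rpow_mul_le (sub_pos.mpr hq)
    (ENNReal.add_ne_top.mpr ⟨hC, hC⟩) hδ2
  obtain ⟨K, hK⟩ := hvanish ε hε
  have hKv : ∀ x ∉ K, v x ≤ ε := fun x hx => le_of_tendsto' (hpointwise x) fun i => hK i x hx
  have hterm (x : X) : Tendsto (fun i => edist (u i x) (v x) ^ q) l (𝓝 0) := by
    have := (tendsto_iff_edist_tendsto_0.mp (hpointwise x)).ennrpow_const q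
    rwa [ENNReal.zero_rpow_of_pos hq0] at this
  have hsum : Tendsto (fun i => ∑ x ∈ K, edist (u i x) (v x) ^ q) l (𝓝 0) := by
    simpa only [Finset.sum_const_zero] using tendsto_finsetSum K fun x _ => hterm x
  filter_upwards [hsum.eventually_le_const hδ2] with i hi
  calc ∑' x, edist (u i x) (v x) ^ q
      ≤ ∑ x ∈ K, edist (u i x) (v x) ^ q +
          (ε : ℝ≥0∞) ^ (q - p) * (∑' x, (u i x : ℝ≥0∞) ^ p + ∑' x, (v x : ℝ≥0∞) ^ p) :=
        tsum_edist_rpow_le hp hq.le (hK i) hKv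
    _ ≤ δ / 2 + (ε : ℝ≥0∞) ^ (q - p) * (C + C) := by gcongr; exact hu i
    _ ≤ δ / 2 + δ / 2 := by gcongr
    _ = δ := ENNReal.add_halves δ

theorem isCompact_setOf_tsum_rpow_le {C : ℝ≥0∞} (hp : 0 < p) (hC : C ≠ ∞) :
    IsCompact {w : X → NNReal | ∑' x, (w x : ℝ≥0∞) ^ p ≤ C} := by
  have hlsc : LowerSemicontinuous fun w : X → NNReal => ∑' x, (w x : ℝ≥0∞) ^ p :=
    lowerSemicontinuous_tsum fun x => Continuous.lowerSemicontinuous <|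
      ENNReal.continuous_rpow_const.comp (ENNReal.continuous_coe.comp (continuous_apply x))
  have hbox : IsCompact (Set.univ.pi fun _ : X => Set.Icc 0 (C ^ p⁻¹).toNNReal) :=
    isCompact_univ_pi fun _ => isCompact_Icc
  exact hbox.of_isClosed_subset (hlsc.isClosed_preimage C) fun w hw x _ =>
    ⟨zero_le, le_toNNReal_of_tsum_rpow_le hp hC hw x⟩

theorem exists_subseq_tendsto_tsum_edist_rpow [Countable X] {u : ℕ → X → NNReal} {C : ℝ≥0∞}
    (hp : 0 < p) (hq : p < q) (hC : C ≠ ∞) (hu : ∀ i, ∑' x, (u i x : ℝ≥0∞) ^ p ≤ C)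
    (hvanish : ∀ ε : NNReal, 0 < ε → ∃ K : Finset X, ∀ i, ∀ x ∉ K, u i x ≤ ε) :
    ∃ φ : ℕ → ℕ, StrictMono φ ∧ ∃ v : X → NNReal,
      Tendsto (fun i => ∑' x, edist (u (φ i) x) (v x) ^ q) atTop (𝓝 0) := by
  obtain ⟨v, hv, φ, hφ, hlim⟩ := (isCompact_setOf_tsum_rpow_le hp hC).tendsto_subseq hu
  refine ⟨φ, hφ, v, tendsto_tsum_edist_rpow hp.le hq hC (fun i => hu (φ i)) hv ?_ hlim⟩
  intro ε hε
  obtain ⟨K, hK⟩ := hvanish ε hε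
  exact ⟨K, fun i => hK (φ i)⟩

theorem ofReal_abs_sub_rpow (a b : NNReal) (hq : 0 ≤ q) :
    ENNReal.ofReal (|(a : ℝ) - b| ^ q) = edist a b ^ q := by
  rw [← ENNReal.ofReal_rpow_of_nonneg (abs_nonneg _) hq, edist_dist, NNReal.dist_eq]

end Interpolation

theorem stmt8_general (d : ℕ) (p q : ℝ) (hp : 0 < p) (hq : p < q) (C : ENNReal) (hC : C ≠ ⊤)
    (u : ℕ → ZLat d → NNReal) (hsym : ∀ i, RZd d (u i) = u i)
    (hbd : ∀ i, (∑' x : ZLat d, (u i x : ENNReal) ^ p) ^ (1 / p) ≤ C) :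
    ∃ φ : ℕ → ℕ, StrictMono φ ∧ ∃ v : ZLat d → NNReal,
      Tendsto
        (fun i => (∑' x : ZLat d, ENNReal.ofReal (|(u (φ i) x : ℝ) - (v x : ℝ)| ^ q)) ^ (1 / q))
        atTop (𝓝 0) := by
  have hq0 : 0 < q := hp.trans hq
  have hCp : C ^ p ≠ ⊤ := ENNReal.rpow_ne_top_of_nonneg hp.le hC
  have hsum (i : ℕ) : ∑' x, (u i x : ENNReal) ^ p ≤ C ^ p := by
    rw [← ENNReal.rpow_inv_le_iff hp, ← one_div]
    exact hbd i
  obtain ⟨φ, hφ, v, hlim⟩ := exists_subseq_tendsto_tsum_edist_rpow hp hq hCp hsum fun ε hε => by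
    obtain ⟨K, hK⟩ := exists_finset_forall_notMem_le_of_RZd_eq d hp hCp hε
    exact ⟨K, fun i => hK (u i) (hsym i) (hsum i)⟩
  refine ⟨φ, hφ, v, ?_⟩
  have hroot := hlim.ennrpow_const (1 / q)
  rw [ENNReal.zero_rpow_of_pos (one_div_pos.mpr hq0)] at hroot
  simpa only [ofReal_abs_sub_rpow _ _ hq0.le] using hroot

/-- Compactness: a sequence of Schwarz symmetric functions bounded by 1 in ℓ^p has a
subsequence converging in ℓ^q for every q > p. -/
theorem stmt8 (d : ℕ) (hd : 2 ≤ d) (p q : ℝ) (hp : 1 ≤ p) (hq : p < q)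
    (u : ℕ → ZLat d → NNReal) (hadm : ∀ i, Admissible (u i))
    (hsym : ∀ i, RZd d (u i) = u i)
    (hbd : ∀ i, (∑' x : ZLat d, (u i x : ENNReal) ^ p) ^ (1 / p) ≤ 1) :
    ∃ φ : ℕ → ℕ, StrictMono φ ∧ ∃ v : ZLat d → NNReal,
      Tendsto
        (fun i => (∑' x : ZLat d, ENNReal.ofReal (|(u (φ i) x : ℝ) - (v x : ℝ)| ^ q)) ^ (1 / q))
        atTop (𝓝 0) :=
  stmt8_general d p q (zero_lt_one.trans_le hp) hq 1 ENNReal.one_ne_top u hsym hbd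

end
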